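/- Pointwise autocorrelation coefficients: under the dense cut-and-project hypotheses, with f : ℝ^m → ℂ continuous and |x|^{m+1+α}|f(x)| ≤ C, for every z ∈ L the finite autocorrelation coefficients η_n(z) = (1/vol(B_n)) ∑_{x,y ∈ L ∩ B_n, x−y=z} f(x*) conj(f(y*)) converge as n → ∞ to η(z) = (1/|det(L̃)|) ∫_{ℝ^m} f(u) conj(f(u − z*)) du. -/

import Mathlib

open MeasureTheory Metric

/-- The projection of the lattice to direct space. -/
def physL (d m : ℕ) (L : Submodule ℤ (EuclideanSpace ℝ (Fin d) × EuclideanSpace ℝ (Fin m))) :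
    Set (EuclideanSpace ℝ (Fin d)) :=
  Prod.fst '' (L : Set (EuclideanSpace ℝ (Fin d) × EuclideanSpace ℝ (Fin m)))

/-!
With `A = B_n ∩ (z + B_n)` and `g u = f u * conj (f (u - z⋆))`, the autocorrelation sum over `B_n`
is the value at `0` of the `L`-periodization of `1_A ⊗ g`, and the mean of this periodic function
over a fundamental domain is `vol A * ∫ g / covol L`. It remains to see that the periodization is
nearly constant. Translating its argument by `(s, t)` with `s` bounded and `t` small costs little:
the first coordinate is felt only near the boundary of `A`, which is negligible because balls are
van Hove sets, and the second only through the oscillation of `g`, summed over `A` by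
translation-boundedness. By periodicity these translations suffice: since the projection of `L` to
internal space is dense, every vector of a fundamental domain is one of them modulo `L`.
-/

open Filter Topology Bornology Module
open scoped Pointwise

section Periodization

variable {X V : Type*} [NormedAddCommGroup X] [NormedAddCommGroup V]

/-- The `L`-periodization `x ↦ ∑ p ∈ L, φ (p + x)`; the junk value `0` is taken at the points where
this family is not summable. -/
noncomputable def periodization (L : Submodule ℤ X) (φ : X → V) (x : X) : V :=
  ∑' p : L, φ (p + x)

theorem periodization_zero (L : Submodule ℤ X) (φ : X → V) :
    periodization L φ 0 = ∑' p : L, φ p := by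
  simp only [periodization, add_zero]

theorem periodization_sub_of_mem {L : Submodule ℤ X} (φ : X → V) (x : X) {q : X} (hq : q ∈ L) :
    periodization L φ (x - q) = periodization L φ x := by
  rw [periodization, ← (Equiv.addRight (⟨q, hq⟩ : L)).tsum_eq]
  refine tsum_congr fun p => ?_
  simp only [Equiv.coe_addRight, Submodule.coe_add, add_assoc, add_sub_cancel]

variable [MeasurableSpace X] [BorelSpace X] {μ : Measure X}

instance submodule_vaddInvariantMeasure [μ.IsAddLeftInvariant] (L : Submodule ℤ X) :
    VAddInvariantMeasure L X μ :=
  inferInstanceAs (VAddInvariantMeasure L.toAddSubgroup X μ)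

theorem integrable_tsum_of_tsum_lintegral_enorm_ne_top {α ι : Type*} [MeasurableSpace α]
    [Countable ι] [CompleteSpace V] {μ : Measure α} {f : ι → α → V}
    (hf : ∀ i, AEStronglyMeasurable (f i) μ) (hf_sum : ∑' i, ∫⁻ a, ‖f i a‖ₑ ∂μ ≠ ⊤) :
    Integrable (fun a => ∑' i, f i a) μ := by
  have summable_ae : ∀ᵐ a ∂μ, Summable fun i => f i a := by
    have := summable_norm_of_tsum_eLpNorm_ne_top le_rfl hf
      (by simpa only [eLpNorm_one_eq_lintegral_enorm] using hf_sum)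
    exact this.mono fun _ ha => ha.of_norm
  refine ⟨aestronglyMeasurable_of_tendsto_ae (atTop : Filter (Finset ι))
    (fun s => Finset.aestronglyMeasurable_fun_sum s fun i _ => hf i)
    (summable_ae.mono fun _ ha => ha.hasSum), ?_⟩
  calc ∫⁻ a, ‖∑' i, f i a‖ₑ ∂μ ≤ ∫⁻ a, ∑' i, ‖f i a‖ₑ ∂μ :=
        lintegral_mono fun _ => enorm_tsum_le_tsum_enorm
    _ = ∑' i, ∫⁻ a, ‖f i a‖ₑ ∂μ := lintegral_tsum fun i => (hf i).enorm
    _ < ⊤ := hf_sum.lt_top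

variable {L : Submodule ℤ X} [Countable L] {D : Set X} [μ.IsAddLeftInvariant]

theorem tsum_setLIntegral_enorm_add_ne_top (hD : IsAddFundamentalDomain L D μ) {φ : X → V}
    (hφ : Integrable φ μ) : ∑' p : L, ∫⁻ x in D, ‖φ (p + x)‖ₑ ∂μ ≠ ⊤ := by
  have unfold_lintegral := hD.lintegral_eq_tsum'' fun x => ‖φ x‖ₑ
  exact unfold_lintegral ▸ hφ.2.ne

theorem integrableOn_periodization [CompleteSpace V] (hD : IsAddFundamentalDomain L D μ)
    {φ : X → V} (hφ : Integrable φ μ) : IntegrableOn (periodization L φ) D μ :=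
  integrable_tsum_of_tsum_lintegral_enorm_ne_top
    (fun p : L => (hφ.comp_add_left (p : X)).integrableOn.aestronglyMeasurable)
    (tsum_setLIntegral_enorm_add_ne_top hD hφ)

theorem setIntegral_periodization [NormedSpace ℝ V] (hD : IsAddFundamentalDomain L D μ)
    {φ : X → V} (hφ : Integrable φ μ) : ∫ x in D, periodization L φ x ∂μ = ∫ x, φ x ∂μ :=
  (integral_tsum (fun p : L => (hφ.comp_add_left (p : X)).integrableOn.aestronglyMeasurable)
    (tsum_setLIntegral_enorm_add_ne_top hD hφ)).trans (hD.integral_eq_tsum'' φ hφ).symm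

theorem summable_and_measureReal_mul_tsum_le_integral (hD : IsAddFundamentalDomain L D μ)
    (hD_meas : MeasurableSet D) (hD_pos : μ D ≠ 0) (hD_top : μ D ≠ ⊤) {φ ψ : X → ℝ} (hφ : 0 ≤ φ)
    (hψ : Integrable ψ μ) (hφψ : ∀ y, ∀ v ∈ D, φ y ≤ ψ (y + v)) (x : X) :
    Summable (fun p : L => φ (p + x)) ∧ μ.real D * ∑' p : L, φ (p + x) ≤ ∫ y, ψ y ∂μ := by
  have shifted : Integrable (fun y => ψ (y + x)) μ := hψ.comp_add_right x
  have tiling : HasSum (fun p : L => ∫ y in p +ᵥ D, ψ (y + x) ∂μ) (∫ y, ψ (y + x) ∂μ) := by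
    have := hasSum_integral_measure (hD.sum_restrict.symm ▸ shifted)
    rwa [hD.sum_restrict] at this
  have tile_le (p : L) : μ.real D * φ (p + x) ≤ ∫ y in p +ᵥ D, ψ (y + x) ∂μ := by
    have vadd_measure : μ (p +ᵥ D) = μ D := measure_vadd μ p D
    have := setIntegral_ge_of_const_le_real (μ := μ) (s := p +ᵥ D) (c := φ (p + x))
      (hD_meas.const_vadd p) (vadd_measure ▸ hD_top) ?_ shifted.integrableOn
    · rwa [measureReal_def, vadd_measure, ← measureReal_def, mul_comm] at this
    · rintro _ ⟨v, hv, rfl⟩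
      exact (hφψ _ v hv).trans_eq (congrArg ψ (add_right_comm (p : X) x v))
  have summable_mul : Summable fun p : L => μ.real D * φ (p + x) :=
    .of_nonneg_of_le (fun p => mul_nonneg measureReal_nonneg (hφ _)) tile_le tiling.summable
  have hD_real : μ.real D ≠ 0 := (ENNReal.toReal_pos hD_pos hD_top).ne'
  refine ⟨(summable_mul_left_iff hD_real).1 summable_mul, ?_⟩
  rw [← tsum_mul_left, ← integral_add_right_eq_self ψ x]
  exact hasSum_le tile_le summable_mul.hasSum tiling

end Periodization

section DecayWeight

variable {F V : Type*} [NormedAddCommGroup F] [NormedAddCommGroup V]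

/-- The weight `(1 + ‖u‖) ^ (-s)` against which decay of order `s` at infinity is measured; unlike
`‖u‖ ^ (-s)` it is bounded, and positive everywhere. -/
noncomputable def decayWeight (s : ℝ) (u : F) : ℝ :=
  (1 + ‖u‖) ^ (-s)

theorem decayWeight_pos (s : ℝ) (u : F) : 0 < decayWeight s u :=
  Real.rpow_pos_of_pos (by positivity) _

theorem decayWeight_add (r s : ℝ) (u : F) :
    decayWeight (r + s) u = decayWeight r u * decayWeight s u := by
  rw [decayWeight, neg_add, Real.rpow_add (by positivity), decayWeight, decayWeight]

theorem decayWeight_rpow (r θ : ℝ) (u : F) : decayWeight r u ^ θ = decayWeight (r * θ) u := by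
  rw [decayWeight, ← Real.rpow_mul (by positivity), neg_mul, decayWeight]

theorem decayWeight_le_decayWeight {s r : ℝ} (hsr : s ≤ r) (u : F) :
    decayWeight r u ≤ decayWeight s u :=
  Real.rpow_le_rpow_of_exponent_le (by linarith [norm_nonneg u]) (neg_le_neg hsr)

theorem decayWeight_le_mul_decayWeight_add {s : ℝ} (hs : 0 ≤ s) (u v : F) :
    decayWeight s u ≤ (1 + ‖v‖) ^ s * decayWeight s (u + v) := by
  have submultiplicative : 1 + ‖u + v‖ ≤ (1 + ‖v‖) * (1 + ‖u‖) := by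
    nlinarith [norm_add_le u v, norm_nonneg u, norm_nonneg v]
  have rpow_le : (1 + ‖u + v‖) ^ s ≤ (1 + ‖v‖) ^ s * (1 + ‖u‖) ^ s := by
    rw [← Real.mul_rpow (by positivity) (by positivity)]
    exact Real.rpow_le_rpow (by positivity) submultiplicative hs
  rw [decayWeight, decayWeight, Real.rpow_neg (by positivity), Real.rpow_neg (by positivity),
    ← div_eq_mul_inv, le_div_iff₀ (by positivity), inv_mul_le_iff₀ (by positivity), mul_comm]
  exact rpow_le

theorem decayWeight_le_mul_decayWeight_add_of_norm_le {s R : ℝ} (hs : 0 ≤ s) (u : F) {v : F}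
    (hv : ‖v‖ ≤ R) : decayWeight s u ≤ (1 + R) ^ s * decayWeight s (u + v) :=
  (decayWeight_le_mul_decayWeight_add hs u v).trans <| by
    have := (decayWeight_pos s (u + v)).le
    gcongr

theorem integrable_decayWeight [NormedSpace ℝ F] [FiniteDimensional ℝ F] [MeasurableSpace F]
    [BorelSpace F] (ν : Measure F) [ν.IsAddHaarMeasure] {s : ℝ} (hs : finrank ℝ F < s) :
    Integrable (decayWeight s : F → ℝ) ν :=
  integrable_one_add_norm hs

theorem tendsto_decayWeight_cocompact [ProperSpace F] {s : ℝ} (hs : 0 < s) :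
    Tendsto (decayWeight s : F → ℝ) (cocompact F) (𝓝 0) :=
  (tendsto_rpow_neg_atTop hs).comp
    (tendsto_atTop_add_const_left _ 1 tendsto_norm_cocompact_atTop)

theorem nonneg_of_norm_le_mul_decayWeight {g : F → V} {C r : ℝ}
    (hgC : ∀ u, ‖g u‖ ≤ C * decayWeight r u) : 0 ≤ C :=
  nonneg_of_mul_nonneg_left ((norm_nonneg _).trans (hgC 0)) (decayWeight_pos r 0)

theorem exists_norm_le_mul_decayWeight [ProperSpace F] {f : F → V} (hf : Continuous f) {C r : ℝ}
    (hr : 0 ≤ r) (hfC : ∀ x, ‖x‖ ^ r * ‖f x‖ ≤ C) :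
    ∃ C', ∀ x, ‖f x‖ ≤ C' * decayWeight r x := by
  obtain ⟨M, hM⟩ := (isCompact_closedBall (0 : F) 1).exists_bound_of_continuousOn hf.continuousOn
  suffices bound : ∀ x, (1 + ‖x‖) ^ r * ‖f x‖ ≤ 2 ^ r * max C M by
    refine ⟨2 ^ r * max C M, fun x => ?_⟩
    rw [decayWeight, Real.rpow_neg (by positivity), ← div_eq_mul_inv, le_div_iff₀ (by positivity),
      mul_comm]
    exact bound x
  intro x
  rcases le_total ‖x‖ 1 with hx | hx
  · gcongr
    · linarith
    · exact (hM x (mem_closedBall_zero_iff.2 hx)).trans (le_max_right _ _)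
  · calc (1 + ‖x‖) ^ r * ‖f x‖ ≤ (2 * ‖x‖) ^ r * ‖f x‖ := by gcongr; linarith
      _ = 2 ^ r * (‖x‖ ^ r * ‖f x‖) := by
        rw [Real.mul_rpow zero_le_two (norm_nonneg x), mul_assoc]
      _ ≤ 2 ^ r * max C M := by gcongr; exact (hfC x).trans (le_max_left _ _)

theorem norm_mul_conj_le_mul_decayWeight {𝕜 : Type*} [RCLike 𝕜] {f : F → 𝕜} {C r : ℝ}
    (hr : 0 ≤ r) (hfC : ∀ u, ‖f u‖ ≤ C * decayWeight r u) (v u : F) :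
    ‖f u * starRingEnd 𝕜 (f (u - v))‖ ≤ C * (C * (1 + ‖v‖) ^ r) * decayWeight (r + r) u := by
  have hC := nonneg_of_norm_le_mul_decayWeight hfC
  have shifted : ‖f (u - v)‖ ≤ C * ((1 + ‖v‖) ^ r * decayWeight r u) := by
    have := decayWeight_le_mul_decayWeight_add hr (u - v) v
    rw [sub_add_cancel] at this
    exact (hfC _).trans (by gcongr)
  have := (decayWeight_pos r u).le
  calc ‖f u * starRingEnd 𝕜 (f (u - v))‖ = ‖f u‖ * ‖f (u - v)‖ := by rw [norm_mul, RCLike.norm_conj]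
    _ ≤ (C * decayWeight r u) * (C * ((1 + ‖v‖) ^ r * decayWeight r u)) := by
      gcongr
      exact hfC u
    _ = C * (C * (1 + ‖v‖) ^ r) * decayWeight (r + r) u := by rw [decayWeight_add]; ring

theorem uniformContinuous_of_norm_le_mul_decayWeight [ProperSpace F] {g : F → V}
    (hg : Continuous g) {C r : ℝ} (hr : 0 < r) (hgC : ∀ u, ‖g u‖ ≤ C * decayWeight r u) :
    UniformContinuous g := by
  refine hg.uniformContinuous_of_tendsto_cocompact (x := 0) (squeeze_zero_norm hgC ?_)
  simpa only [mul_zero] using (tendsto_decayWeight_cocompact hr).const_mul C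

theorem exists_norm_add_sub_le_of_norm_le_one {g : F → V} {C r : ℝ} (hr : 0 ≤ r)
    (hgC : ∀ u, ‖g u‖ ≤ C * decayWeight r u) :
    ∃ M > 0, ∀ u v : F, ‖v‖ ≤ 1 → ‖g (u + v) - g u‖ ≤ M * decayWeight r u := by
  have hC := nonneg_of_norm_le_mul_decayWeight hgC
  refine ⟨C * 2 ^ r + C + 1, by positivity, fun u v hv => ?_⟩
  have hu := (decayWeight_pos r u).le
  have moderate : decayWeight r (u + v) ≤ 2 ^ r * decayWeight r u := by
    have := decayWeight_le_mul_decayWeight_add_of_norm_le hr (u + v) ((norm_neg v).trans_le hv)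
    rwa [add_neg_cancel_right, one_add_one_eq_two] at this
  calc ‖g (u + v) - g u‖ ≤ ‖g (u + v)‖ + ‖g u‖ := norm_sub_le _ _
    _ ≤ C * (2 ^ r * decayWeight r u) + C * decayWeight r u :=
      add_le_add ((hgC _).trans (by gcongr)) (hgC u)
    _ ≤ (C * 2 ^ r + C + 1) * decayWeight r u := by linarith

theorem exists_norm_add_sub_le_mul_decayWeight [ProperSpace F] {g : F → V} (hg : Continuous g)
    {C r s : ℝ} (hs : 0 ≤ s) (hsr : s < r) (hgC : ∀ u, ‖g u‖ ≤ C * decayWeight r u)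
    {ε : ℝ} (hε : 0 < ε) :
    ∃ δ > 0, ∀ u v : F, ‖v‖ < δ → ‖g (u + v) - g u‖ ≤ ε * decayWeight s u := by
  have hr : 0 < r := hs.trans_lt hsr
  set θ : ℝ := s / r with hθ_def
  have hθ : 0 ≤ θ := by positivity
  have hθ_lt : 0 < 1 - θ := sub_pos.2 ((div_lt_one hr).2 hsr)
  obtain ⟨M, hM, decay⟩ := exists_norm_add_sub_le_of_norm_le_one hr.le hgC
  set η : ℝ := (ε / M ^ θ) ^ (1 - θ)⁻¹ with hη_def
  obtain ⟨δ, hδ, uniform⟩ := Metric.uniformContinuous_iff.1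
    (uniformContinuous_of_norm_le_mul_decayWeight hg hr hgC) η (by positivity)
  refine ⟨min δ 1, lt_min hδ one_pos, fun u v hv => ?_⟩
  obtain ⟨hvδ, hv1⟩ := lt_min_iff.1 hv
  have small : ‖g (u + v) - g u‖ ≤ η := by
    rw [← dist_eq_norm]
    exact (uniform (by rwa [dist_eq_norm, add_sub_cancel_left])).le
  -- Interpolate between smallness and decay.
  calc ‖g (u + v) - g u‖ = ‖g (u + v) - g u‖ ^ (1 - θ) * ‖g (u + v) - g u‖ ^ θ := by
        rw [← Real.rpow_add_of_nonneg (norm_nonneg _) hθ_lt.le hθ, sub_add_cancel, Real.rpow_one]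
    _ ≤ η ^ (1 - θ) * (M * decayWeight r u) ^ θ := by
        gcongr
        exact decay u v hv1.le
    _ = ε * decayWeight s u := by
        rw [hη_def, Real.rpow_inv_rpow (by positivity) hθ_lt.ne',
          Real.mul_rpow hM.le (decayWeight_pos r u).le, decayWeight_rpow, hθ_def,
          mul_div_cancel₀ _ hr.ne', ← mul_assoc, div_mul_cancel₀ _ (by positivity)]

end DecayWeight

section VanHoveBoundary

/-- The van Hove boundary of thickness `ρ`: the points at distance less than `ρ` from both `A` and
its complement. -/
def vanHoveBoundary {E : Type*} [PseudoEMetricSpace E] (ρ : ℝ) (A : Set E) : Set E :=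
  thickening ρ A ∩ thickening ρ Aᶜ

variable {E : Type*} [PseudoMetricSpace E] {A : Set E} {ρ ρ' R : ℝ}

theorem mem_iff_mem_of_notMem_vanHoveBoundary {a b : E} (ha : a ∉ vanHoveBoundary ρ A)
    (hab : dist a b < ρ) : b ∈ A ↔ a ∈ A := by
  have hρ : dist a a < ρ := (dist_self a).trans_lt (dist_nonneg.trans_lt hab)
  by_contra hne
  refine ha ?_
  rcases Classical.em (a ∈ A) with haA | haA
  · have hbA : b ∈ Aᶜ := fun hb => hne (iff_of_true hb haA)
    exact ⟨mem_thickening_iff.2 ⟨a, haA, hρ⟩, mem_thickening_iff.2 ⟨b, hbA, hab⟩⟩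
  · have hbA : b ∈ A := by_contra fun hb => hne (iff_of_false hb haA)
    exact ⟨mem_thickening_iff.2 ⟨b, hbA, hab⟩, mem_thickening_iff.2 ⟨a, haA, hρ⟩⟩

theorem vanHoveBoundary_mono (h : ρ ≤ ρ') (A : Set E) :
    vanHoveBoundary ρ A ⊆ vanHoveBoundary ρ' A :=
  Set.inter_subset_inter (thickening_mono h A) (thickening_mono h Aᶜ)

theorem thickening_vanHoveBoundary_subset (R ρ : ℝ) (A : Set E) :
    thickening R (vanHoveBoundary ρ A) ⊆ vanHoveBoundary (R + ρ) A :=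
  Set.subset_inter
    ((thickening_subset_of_subset R Set.inter_subset_left).trans
      (thickening_thickening_subset R ρ A))
    ((thickening_subset_of_subset R Set.inter_subset_right).trans
      (thickening_thickening_subset R ρ Aᶜ))

theorem thickening_subset_union_vanHoveBoundary (hR : 0 < R) (A : Set E) :
    thickening R A ⊆ A ∪ vanHoveBoundary R A := fun a ha =>
  (Classical.em (a ∈ A)).imp_right fun haA => ⟨ha, self_subset_thickening hR Aᶜ haA⟩

theorem vanHoveBoundary_subset_closedBall_diff_closedBall {x : E} {r : ℝ}
    (hrA : closedBall x r ⊆ A) (hAR : A ⊆ closedBall x R) (ρ : ℝ) :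
    vanHoveBoundary ρ A ⊆ closedBall x (R + ρ) \ closedBall x (r - ρ) := by
  rintro a ⟨near, near_compl⟩
  obtain ⟨b, hb, hab⟩ := mem_thickening_iff.1 near
  obtain ⟨b', hb', hab'⟩ := mem_thickening_iff.1 near_compl
  refine ⟨mem_closedBall.2 ?_, fun ha => hb' (hrA (mem_closedBall.2 ?_))⟩
  · linarith [dist_triangle a b x, mem_closedBall.1 (hAR hb)]
  · linarith [dist_triangle_left b' x a, mem_closedBall.1 ha]

theorem isBounded_vanHoveBoundary (hA : IsBounded A) (ρ : ℝ) : IsBounded (vanHoveBoundary ρ A) :=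
  hA.thickening.subset Set.inter_subset_left

variable [ProperSpace E] [MeasurableSpace E] {μ : Measure E} [IsFiniteMeasureOnCompacts μ]

theorem measureReal_thickening_vanHoveBoundary_le (hA : IsBounded A) (R ρ : ℝ) :
    μ.real (thickening R (vanHoveBoundary ρ A)) ≤ μ.real (vanHoveBoundary (R + ρ) A) :=
  measureReal_mono (thickening_vanHoveBoundary_subset R ρ A)
    (isBounded_vanHoveBoundary hA _).measure_lt_top.ne

theorem measureReal_thickening_le (hA : IsBounded A) (hR : 0 < R) :
    μ.real (thickening R A) ≤ μ.real A + μ.real (vanHoveBoundary R A) :=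
  (measureReal_mono (thickening_subset_union_vanHoveBoundary hR A)
    (hA.union (isBounded_vanHoveBoundary hA _)).measure_lt_top.ne).trans (measureReal_union_le _ _)

end VanHoveBoundary

section IndicatorTensor

/-- The tensor product `1_A ⊗ g` of the indicator function of `A` with `g`. Its sum over a lattice
in `E × F` is the sum of `g (x⋆)` over the projected lattice points `x` lying in `A`. -/
noncomputable def indicatorTensor {E F V : Type*} [Zero V] (A : Set E) (g : F → V) (y : E × F) :
    V :=
  A.indicator (fun _ => g y.2) y.1

variable {E F V : Type*} [NormedAddCommGroup V] {A : Set E}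

theorem indicatorTensor_nonneg {w : F → ℝ} (hw : ∀ u, 0 ≤ w u) (A : Set E) (y : E × F) :
    0 ≤ indicatorTensor A w y :=
  Set.indicator_apply_nonneg fun _ => hw y.2

theorem norm_indicatorTensor_le {g : F → V} {w : F → ℝ} {C : ℝ} (hg : ∀ u, ‖g u‖ ≤ C * w u)
    (A : Set E) (y : E × F) : ‖indicatorTensor A g y‖ ≤ C * indicatorTensor A w y := by
  by_cases hy : y.1 ∈ A
  · simpa only [indicatorTensor, Set.indicator_of_mem hy] using hg y.2
  · simp only [indicatorTensor, Set.indicator_of_notMem hy, norm_zero, mul_zero, le_refl]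

theorem indicatorTensor_eq_smul [NormedSpace ℝ V] (A : Set E) (g : F → V) :
    indicatorTensor A g = fun y => A.indicator (1 : E → ℝ) y.1 • g y.2 := by
  funext y
  by_cases hy : y.1 ∈ A
  · simp only [indicatorTensor, Set.indicator_of_mem hy, Pi.one_apply, one_smul]
  · simp only [indicatorTensor, Set.indicator_of_notMem hy, zero_smul]

section Integral

variable [MeasurableSpace E] [MeasurableSpace F] {μ : Measure E} {ν : Measure F}
  [NormedSpace ℝ V]

theorem integrable_indicatorTensor (hA : MeasurableSet A) (hμA : μ A ≠ ⊤) {g : F → V}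
    (hg : Integrable g ν) : Integrable (indicatorTensor A g) (μ.prod ν) := by
  rw [indicatorTensor_eq_smul]
  exact ((integrable_indicator_iff hA).2 (integrableOn_const hμA)).smul_prod hg

theorem integral_indicatorTensor [SFinite μ] [SFinite ν] (hA : MeasurableSet A) (g : F → V) :
    ∫ y, indicatorTensor A g y ∂μ.prod ν = μ.real A • ∫ u, g u ∂ν := by
  rw [indicatorTensor_eq_smul, integral_prod_smul, integral_indicator_one hA]

end Integral

variable [SeminormedAddCommGroup E] [AddCommGroup F]

theorem norm_indicatorTensor_add_fst_sub_le {g : F → V} {w : F → ℝ} {C : ℝ}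
    (hg : ∀ u, ‖g u‖ ≤ C * w u) (A : Set E) {s : E} {ρ : ℝ} (hs : ‖s‖ < ρ) (y : E × F) :
    ‖indicatorTensor A g (y + (s, 0)) - indicatorTensor A g y‖ ≤
      C * indicatorTensor (vanHoveBoundary ρ A) w y := by
  have hCw := (norm_nonneg _).trans (hg y.2)
  have hdist : dist y.1 (y.1 + s) < ρ := by rwa [dist_self_add_right]
  by_cases hy : y.1 ∈ vanHoveBoundary ρ A
  · simp only [indicatorTensor, Prod.fst_add, Prod.snd_add, add_zero, Set.indicator_of_mem hy]
    by_cases h₁ : y.1 + s ∈ A <;> by_cases h₂ : y.1 ∈ A <;> simp [h₁, h₂, hg, hCw]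
  · have same := mem_iff_mem_of_notMem_vanHoveBoundary hy hdist
    by_cases h : y.1 ∈ A <;> simp [indicatorTensor, same, h, hy]

theorem norm_indicatorTensor_add_snd_sub_le {g : F → V} {w : F → ℝ} {ε : ℝ} {t : F}
    (ht : ∀ u, ‖g (u + t) - g u‖ ≤ ε * w u) (A : Set E) (y : E × F) :
    ‖indicatorTensor A g (y + (0, t)) - indicatorTensor A g y‖ ≤ ε * indicatorTensor A w y := by
  by_cases hy : y.1 ∈ A <;> simp [indicatorTensor, hy, ht]

end IndicatorTensor

section TranslationBounded

variable {E F V : Type*} [NormedAddCommGroup E] [NormedAddCommGroup F] [NormedAddCommGroup V]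

theorem indicatorTensor_decayWeight_le {s R : ℝ} (hs : 0 ≤ s) (A : Set E) (y : E × F) {v : E × F}
    (hv : ‖v‖ < R) : indicatorTensor A (decayWeight s) y ≤
      (1 + R) ^ s * indicatorTensor (thickening R A) (decayWeight s) (y + v) := by
  have hR : 0 ≤ R := (norm_nonneg v).trans hv.le
  by_cases hy : y.1 ∈ A
  · have hyv : (y + v).1 ∈ thickening R A := mem_thickening_iff.2 ⟨y.1, hy, by
      rw [Prod.fst_add, dist_self_add_left]
      exact (norm_fst_le v).trans_lt hv⟩
    rw [indicatorTensor, indicatorTensor, Set.indicator_of_mem hy, Set.indicator_of_mem hyv]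
    exact decayWeight_le_mul_decayWeight_add_of_norm_le hs y.2 ((norm_snd_le v).trans hv.le)
  · rw [indicatorTensor, Set.indicator_of_notMem hy]
    exact mul_nonneg (by positivity)
      (indicatorTensor_nonneg (fun u => (decayWeight_pos s u).le) _ _)

variable [MeasurableSpace E]

/-- Translation-boundedness of the weighted Dirac comb obtained by projecting `L ⊆ E × F` to `E`
with the weight `w` on `F`: uniformly over all translates of the lattice, the mass of a bounded set
`A` is at most `K` times the measure of the `R`-thickening of `A`. -/
structure IsTranslationBounded (L : Submodule ℤ (E × F)) (μ : Measure E) (w : F → ℝ) (K R : ℝ) :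
    Prop where
  const_nonneg : 0 ≤ K
  radius_pos : 0 < R
  summable {A : Set E} : IsBounded A → ∀ x, Summable fun p : L => indicatorTensor A w (p + x)
  tsum_le {A : Set E} : IsBounded A → ∀ x,
    ∑' p : L, indicatorTensor A w (p + x) ≤ K * μ.real (thickening R A)

section Lattice

variable [NormedSpace ℝ E] [FiniteDimensional ℝ E] [BorelSpace E] [NormedSpace ℝ F]
  [FiniteDimensional ℝ F] (L : Submodule ℤ (E × F)) [DiscreteTopology L] [IsZLattice ℝ L]

theorem exists_isBounded_isAddFundamentalDomain [MeasurableSpace F] [BorelSpace F]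
    (μ : Measure (E × F)) :
    ∃ D, IsAddFundamentalDomain L D μ ∧ MeasurableSet D ∧ IsBounded D :=
  ⟨_, ZLattice.isAddFundamentalDomain (Module.Free.chooseBasis ℤ L) μ,
    ZSpan.fundamentalDomain_measurableSet _, ZSpan.fundamentalDomain_isBounded _⟩

theorem exists_isTranslationBounded_decayWeight (μ : Measure E) [μ.IsAddHaarMeasure] {s : ℝ}
    (hs : finrank ℝ F < s) : ∃ K R, IsTranslationBounded L μ (decayWeight s) K R := by
  borelize F
  let ν : Measure F := Measure.addHaar
  have hs₀ : 0 ≤ s := (Nat.cast_nonneg _).trans hs.le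
  obtain ⟨D, hD, hD_meas, hD_bdd⟩ := exists_isBounded_isAddFundamentalDomain L (μ.prod ν)
  obtain ⟨R, hR, hDR⟩ := hD_bdd.subset_ball_lt 0 0
  have bound {A : Set E} (hA : IsBounded A) := summable_and_measureReal_mul_tsum_le_integral hD
    hD_meas (hD.measure_ne_zero (NeZero.ne _)) hD_bdd.measure_lt_top.ne
    (indicatorTensor_nonneg (fun u => (decayWeight_pos s u).le) A)
    ((integrable_indicatorTensor isOpen_thickening.measurableSet
      hA.thickening.measure_lt_top.ne (integrable_decayWeight ν hs)).const_mul ((1 + R) ^ s))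
    fun y v hv => indicatorTensor_decayWeight_le hs₀ A y (mem_ball_zero_iff.1 (hDR hv))
  refine ⟨((μ.prod ν).real D)⁻¹ * ((1 + R) ^ s * ∫ u, decayWeight s u ∂ν), R, ?_, hR,
    fun hA x => (bound hA x).1, fun {A} hA x => ?_⟩
  · have : 0 ≤ ∫ u, decayWeight s u ∂ν := integral_nonneg fun u => (decayWeight_pos s u).le
    positivity
  · have hD_pos : 0 < (μ.prod ν).real D :=
      ENNReal.toReal_pos (hD.measure_ne_zero (NeZero.ne _)) hD_bdd.measure_lt_top.ne
    have := (bound hA x).2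
    rw [integral_const_mul, integral_indicatorTensor isOpen_thickening.measurableSet,
      ← le_inv_mul_iff₀ hD_pos, smul_eq_mul] at this
    exact this.trans_eq (by ring)

end Lattice

namespace IsTranslationBounded

variable {L : Submodule ℤ (E × F)} {μ : Measure E} {w : F → ℝ} {K R : ℝ} {A : Set E}

theorem summable_of_norm_le [CompleteSpace V] (h : IsTranslationBounded L μ w K R)
    (hA : IsBounded A) (x : E × F) {a : L → V} {c : ℝ}
    (ha : ∀ p : L, ‖a p‖ ≤ c * indicatorTensor A w (p + x)) : Summable a :=
  .of_norm_bounded ((h.summable hA x).mul_left c) ha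

theorem norm_tsum_le (h : IsTranslationBounded L μ w K R) (hA : IsBounded A) (x : E × F)
    {a : L → V} {c : ℝ} (hc : 0 ≤ c) (ha : ∀ p : L, ‖a p‖ ≤ c * indicatorTensor A w (p + x)) :
    ‖∑' p, a p‖ ≤ c * (K * μ.real (thickening R A)) :=
  (tsum_of_norm_bounded ((h.summable hA x).hasSum.mul_left c) ha).trans
    (mul_le_mul_of_nonneg_left (h.tsum_le hA x) hc)

theorem norm_periodization_sub_le (h : IsTranslationBounded L μ w K R) (hA : IsBounded A)
    {φ : E × F → V} (hφ : ∀ x, Summable fun p : L => φ (p + x)) {c : ℝ} (hc : 0 ≤ c) {v : E × F}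
    (hv : ∀ y, ‖φ (y + v) - φ y‖ ≤ c * indicatorTensor A w y) (x : E × F) :
    ‖periodization L φ (x + v) - periodization L φ x‖ ≤ c * (K * μ.real (thickening R A)) := by
  rw [periodization, periodization, ← (hφ _).tsum_sub (hφ _)]
  refine h.norm_tsum_le hA x hc fun p => ?_
  rw [← add_assoc]
  exact hv _

end IsTranslationBounded

end TranslationBounded

section Equidistribution

variable {E F V : Type*} [NormedAddCommGroup E] [NormedAddCommGroup F] [NormedAddCommGroup V]

theorem exists_norm_fst_sub_lt_norm_snd_sub_lt_of_dense {S : Set (E × F)}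
    (hS : Dense (Prod.snd '' S)) {T : Set (E × F)} (hT : IsCompact T) {δ : ℝ} (hδ : 0 < δ) :
    ∃ ρ > 0, ∀ x ∈ T, ∃ q ∈ S, ‖x.1 - q.1‖ < ρ ∧ ‖x.2 - q.2‖ < δ := by
  let U (n : ℕ) : Set (E × F) := ⋃ q ∈ S, ball q.1 n ×ˢ ball q.2 δ
  have hU_open (n : ℕ) : IsOpen (U n) := isOpen_biUnion fun _ _ => isOpen_ball.prod isOpen_ball
  have hU_cover : T ⊆ ⋃ n, U n := fun x _ => by
    obtain ⟨_, hx, q, hq, rfl⟩ := Metric.dense_iff.1 hS x.2 δ hδ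
    obtain ⟨n, hn⟩ := exists_nat_gt (dist x.1 q.1)
    exact Set.mem_iUnion.2 ⟨n, Set.mem_biUnion hq ⟨hn, mem_ball_comm.1 hx⟩⟩
  have hU_mono : Monotone U := fun n k hnk => Set.iUnion₂_mono fun q _ =>
    Set.prod_mono (ball_subset_ball (Nat.cast_le.2 hnk)) subset_rfl
  obtain ⟨n, hn⟩ := hT.elim_directed_cover U hU_open hU_cover hU_mono.directed_le
  refine ⟨n + 1, by positivity, fun x hx => ?_⟩
  obtain ⟨q, hq, fst_mem, snd_mem⟩ := Set.mem_iUnion₂.1 (hn hx)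
  exact ⟨q, hq, (mem_ball_iff_norm.1 fst_mem).trans (lt_add_one _), mem_ball_iff_norm.1 snd_mem⟩

variable [NormedSpace ℝ E] [FiniteDimensional ℝ E] [MeasurableSpace E] {μ : Measure E}
  [NormedSpace ℝ F] [FiniteDimensional ℝ F] [CompleteSpace V]
  {L : Submodule ℤ (E × F)} {g : F → V} {C s r K R : ℝ}

theorem exists_norm_periodization_sub_le_of_isTranslationBounded
    (h : IsTranslationBounded L μ (decayWeight s) K R) (hL : Dense (Prod.snd '' (L : Set (E × F))))
    (hs : 0 ≤ s) (hsr : s < r) (hg : Continuous g)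
    (hgC : ∀ u, ‖g u‖ ≤ C * decayWeight r u) {D : Set (E × F)} (hD : IsBounded D) {ε : ℝ}
    (hε : 0 < ε) :
    ∃ ρ > 0, ∀ A : Set E, IsBounded A → ∀ x ∈ D,
      ‖periodization L (indicatorTensor A g) x - periodization L (indicatorTensor A g) 0‖ ≤
        ε * (K * μ.real (thickening R A)) +
          C * (K * μ.real (thickening R (vanHoveBoundary ρ A))) := by
  obtain ⟨δ, hδ, oscillation⟩ := exists_norm_add_sub_le_mul_decayWeight hg hs hsr hgC hε
  obtain ⟨ρ, hρ, near_lattice⟩ :=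
    exists_norm_fst_sub_lt_norm_snd_sub_lt_of_dense hL hD.isCompact_closure hδ
  have hC := nonneg_of_norm_le_mul_decayWeight hgC
  refine ⟨ρ, hρ, fun A hA x hx => ?_⟩
  obtain ⟨q, hq, fst_lt, snd_lt⟩ := near_lattice x (subset_closure hx)
  have hgs (u : F) : ‖g u‖ ≤ C * decayWeight s u :=
    (hgC u).trans (mul_le_mul_of_nonneg_left (decayWeight_le_decayWeight hsr.le u) hC)
  have summable (y : E × F) : Summable fun p : L => indicatorTensor A g (p + y) :=
    h.summable_of_norm_le hA y fun p => norm_indicatorTensor_le hgs A _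
  have translate : periodization L (indicatorTensor A g) (0 + (x.1 - q.1, 0) + (0, x.2 - q.2)) =
      periodization L (indicatorTensor A g) x := by
    rw [← periodization_sub_of_mem _ x hq]
    congr 1
    ext <;> simp
  have move_fst := h.norm_periodization_sub_le (isBounded_vanHoveBoundary hA _) summable hC
    (norm_indicatorTensor_add_fst_sub_le hgs A fst_lt) 0
  have move_snd := h.norm_periodization_sub_le hA summable hε.le
    (norm_indicatorTensor_add_snd_sub_le (fun u => oscillation u _ snd_lt) A)
    (0 + (x.1 - q.1, 0))
  rw [translate] at move_snd
  exact (norm_sub_le_norm_sub_add_norm_sub _ _ _).trans (add_le_add move_snd move_fst)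

variable [BorelSpace E] [μ.IsAddHaarMeasure] [DiscreteTopology L] [IsZLattice ℝ L]

theorem exists_norm_periodization_sub_le (hL : Dense (Prod.snd '' (L : Set (E × F))))
    (hr : finrank ℝ F < r) (hg : Continuous g)
    (hgC : ∀ u, ‖g u‖ ≤ C * decayWeight r u) {D : Set (E × F)} (hD : IsBounded D) {ε : ℝ}
    (hε : 0 < ε) :
    ∃ M ρ, ∀ A : Set E, IsBounded A → ∀ x ∈ D,
      ‖periodization L (indicatorTensor A g) x - periodization L (indicatorTensor A g) 0‖ ≤
        ε * μ.real A + M * μ.real (vanHoveBoundary ρ A) := by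
  obtain ⟨s, hs, hsr⟩ := exists_between hr
  obtain ⟨K, R, h⟩ := exists_isTranslationBounded_decayWeight L μ hs
  have hK := h.const_nonneg
  have hC := nonneg_of_norm_le_mul_decayWeight hgC
  have hεK : ε / (K + 1) * K ≤ ε := by
    rw [div_mul_eq_mul_div, div_le_iff₀ (by positivity)]
    linarith
  obtain ⟨ρ, hρ, bound⟩ := exists_norm_periodization_sub_le_of_isTranslationBounded h hL
    ((Nat.cast_nonneg _).trans hs.le) hsr hg hgC hD (show 0 < ε / (K + 1) by positivity)
  refine ⟨ε + C * K, R + ρ, fun A hA x hx => (bound A hA x hx).trans ?_⟩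
  have boundary_mono : μ.real (vanHoveBoundary R A) ≤ μ.real (vanHoveBoundary (R + ρ) A) :=
    measureReal_mono (vanHoveBoundary_mono (le_add_of_nonneg_right hρ.le) A)
      (isBounded_vanHoveBoundary hA _).measure_lt_top.ne
  have thickening_le : μ.real (thickening R A) ≤ μ.real A + μ.real (vanHoveBoundary (R + ρ) A) :=
    (measureReal_thickening_le hA h.radius_pos).trans (add_le_add_right boundary_mono _)
  have thickening_boundary_le := measureReal_thickening_vanHoveBoundary_le (μ := μ) hA R ρ
  calc ε / (K + 1) * (K * μ.real (thickening R A)) +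
        C * (K * μ.real (thickening R (vanHoveBoundary ρ A)))
      ≤ ε * (μ.real A + μ.real (vanHoveBoundary (R + ρ) A)) +
        C * (K * μ.real (vanHoveBoundary (R + ρ) A)) := by
        rw [← mul_assoc]
        gcongr
    _ = ε * μ.real A + (ε + C * K) * μ.real (vanHoveBoundary (R + ρ) A) := by ring

variable [NormedSpace ℝ V] [MeasurableSpace F] [BorelSpace F] {ν : Measure F}
  [ν.IsAddHaarMeasure]

theorem exists_norm_tsum_indicatorTensor_sub_le (hL : Dense (Prod.snd '' (L : Set (E × F))))
    (hr : finrank ℝ F < r) (hg : Continuous g)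
    (hgC : ∀ u, ‖g u‖ ≤ C * decayWeight r u) {ε : ℝ} (hε : 0 < ε) :
    ∃ M ρ, ∀ A : Set E, IsBounded A → MeasurableSet A →
      ‖∑' p : L, indicatorTensor A g p -
          ((ZLattice.covolume L (μ.prod ν))⁻¹ * μ.real A) • ∫ u, g u ∂ν‖ ≤
        ε * μ.real A + M * μ.real (vanHoveBoundary ρ A) := by
  obtain ⟨D, hD, -, hD_bdd⟩ := exists_isBounded_isAddFundamentalDomain L (μ.prod ν)
  obtain ⟨M, ρ, bound⟩ := exists_norm_periodization_sub_le (μ := μ) hL hr hg hgC hD_bdd hε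
  refine ⟨M, ρ, fun A hA hA_meas => ?_⟩
  have hD_lt_top : (μ.prod ν) D < ⊤ := hD_bdd.measure_lt_top
  have hcov := ZLattice.covolume_eq_measure_fundamentalDomain L (μ.prod ν) hD
  have hcov_pos := ZLattice.covolume_pos L (μ.prod ν)
  have hg_int : Integrable g ν :=
    ((integrable_decayWeight ν hr).const_mul C).mono' hg.aestronglyMeasurable (.of_forall hgC)
  have hA_int : Integrable (indicatorTensor A g) (μ.prod ν) :=
    integrable_indicatorTensor hA_meas hA.measure_lt_top.ne hg_int
  have average : ∫ x in D, (periodization L (indicatorTensor A g) x -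
      periodization L (indicatorTensor A g) 0) ∂μ.prod ν =
        μ.real A • ∫ u, g u ∂ν -
          ZLattice.covolume L (μ.prod ν) • ∑' p : L, indicatorTensor A g p := by
    rw [integral_sub (integrableOn_periodization hD hA_int)
      (integrableOn_const hD_lt_top.ne), setIntegral_periodization hD hA_int,
      integral_indicatorTensor hA_meas, setIntegral_const, ← hcov, periodization_zero]
  have norm_average_le := norm_setIntegral_le_of_norm_le_const hD_lt_top (bound A hA)
  rw [average, ← hcov, norm_sub_rev, mul_comm] at norm_average_le
  have factor : ∑' p : L, indicatorTensor A g p -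
      ((ZLattice.covolume L (μ.prod ν))⁻¹ * μ.real A) • ∫ u, g u ∂ν =
        (ZLattice.covolume L (μ.prod ν))⁻¹ • (ZLattice.covolume L (μ.prod ν) •
          ∑' p : L, indicatorTensor A g p - μ.real A • ∫ u, g u ∂ν) := by
    rw [smul_sub, inv_smul_smul₀ hcov_pos.ne', mul_smul]
  rw [factor, norm_smul, norm_inv, Real.norm_of_nonneg hcov_pos.le, inv_mul_le_iff₀ hcov_pos]
  exact norm_average_le

end Equidistribution

section VanHove

/-- A van Hove family along `l`: bounded measurable sets, eventually of nonzero measure, whose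
boundary of any fixed thickness is asymptotically negligible. -/
structure IsVanHove {ι E : Type*} [PseudoMetricSpace E] [MeasurableSpace E] (μ : Measure E)
    (l : Filter ι) (A : ι → Set E) : Prop where
  isBounded : ∀ i, IsBounded (A i)
  measurableSet : ∀ i, MeasurableSet (A i)
  eventually_measure_ne_zero : ∀ᶠ i in l, μ (A i) ≠ 0
  tendsto_boundary : ∀ ρ : ℝ,
    Tendsto (fun i => (μ.real (A i))⁻¹ * μ.real (vanHoveBoundary ρ (A i))) l (𝓝 0)

variable {ι E F V : Type*} [NormedAddCommGroup E] [NormedSpace ℝ E] [FiniteDimensional ℝ E]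
  [MeasurableSpace E] [BorelSpace E] {μ : Measure E} [μ.IsAddHaarMeasure] {c : ℝ}

theorem IsVanHove.tendsto_tsum_indicatorTensor [NormedAddCommGroup F] [NormedSpace ℝ F]
    [FiniteDimensional ℝ F] [MeasurableSpace F] [BorelSpace F] {ν : Measure F}
    [ν.IsAddHaarMeasure] [NormedAddCommGroup V] [NormedSpace ℝ V] [CompleteSpace V]
    {L : Submodule ℤ (E × F)} [DiscreteTopology L] [IsZLattice ℝ L]
    (hL : Dense (Prod.snd '' (L : Set (E × F)))) {l : Filter ι} {A : ι → Set E}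
    (hA : IsVanHove μ l A) {g : F → V} {C r : ℝ} (hr : finrank ℝ F < r) (hg : Continuous g)
    (hgC : ∀ u, ‖g u‖ ≤ C * decayWeight r u) :
    Tendsto (fun i => (μ.real (A i))⁻¹ • ∑' p : L, indicatorTensor (A i) g p) l
      (𝓝 ((ZLattice.covolume L (μ.prod ν))⁻¹ • ∫ u, g u ∂ν)) := by
  rw [Metric.tendsto_nhds]
  intro ε hε
  obtain ⟨M, ρ, bound⟩ := exists_norm_tsum_indicatorTensor_sub_le (μ := μ) (ν := ν) hL hr hg hgC
    (half_pos hε)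
  have boundary_small : ∀ᶠ i in l,
      M * ((μ.real (A i))⁻¹ * μ.real (vanHoveBoundary ρ (A i))) < ε / 2 :=
    ((hA.tendsto_boundary ρ).const_mul M).eventually_lt_const (by simpa using half_pos hε)
  filter_upwards [hA.eventually_measure_ne_zero, boundary_small] with i hi small
  have hμ : 0 < μ.real (A i) := ENNReal.toReal_pos hi (hA.isBounded i).measure_lt_top.ne
  have factor : (μ.real (A i))⁻¹ • ∑' p : L, indicatorTensor (A i) g p -
      (ZLattice.covolume L (μ.prod ν))⁻¹ • ∫ u, g u ∂ν =
        (μ.real (A i))⁻¹ • (∑' p : L, indicatorTensor (A i) g p -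
          ((ZLattice.covolume L (μ.prod ν))⁻¹ * μ.real (A i)) • ∫ u, g u ∂ν) := by
    rw [smul_sub, mul_comm, mul_smul, inv_smul_smul₀ hμ.ne']
  rw [dist_eq_norm, factor, norm_smul, norm_inv, Real.norm_of_nonneg hμ.le]
  calc (μ.real (A i))⁻¹ * ‖_‖
      ≤ (μ.real (A i))⁻¹ * (ε / 2 * μ.real (A i) + M * μ.real (vanHoveBoundary ρ (A i))) := by
        gcongr
        exact bound _ (hA.isBounded i) (hA.measurableSet i)
    _ = ε / 2 + M * ((μ.real (A i))⁻¹ * μ.real (vanHoveBoundary ρ (A i))) := by field_simp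
    _ < ε := by linarith

theorem tendsto_measureReal_closedBall_add_ratio (c : ℝ) :
    Tendsto (fun R : ℝ => (μ.real (closedBall (0 : E) R))⁻¹ * μ.real (closedBall (0 : E) (R + c)))
      atTop (𝓝 1) := by
  have limit : Tendsto (fun R : ℝ => (1 + c / R) ^ finrank ℝ E) atTop (𝓝 1) := by
    simpa only [add_zero, one_pow, id_eq] using
      ((tendsto_const_nhds (x := c).div_atTop tendsto_id).const_add 1).pow (finrank ℝ E)
  refine limit.congr' ?_
  filter_upwards [eventually_gt_atTop 0, eventually_ge_atTop (-c)] with R hR hRc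
  have unit_ball_pos : 0 < μ.real (ball (0 : E) 1) :=
    ENNReal.toReal_pos (measure_ball_pos _ _ one_pos).ne' measure_ball_lt_top.ne
  rw [Measure.addHaar_real_closedBall μ _ hR.le,
    Measure.addHaar_real_closedBall μ _ (neg_le_iff_add_nonneg.1 hRc), one_add_div hR.ne', div_pow]
  field_simp

theorem tendsto_measureReal_ratio_of_closedBall_subset {A : ℝ → Set E}
    (hA_lower : ∀ R, closedBall 0 (R - c) ⊆ A R) (hA_upper : ∀ R, A R ⊆ closedBall 0 R) :
    Tendsto (fun R => (μ.real (closedBall (0 : E) R))⁻¹ * μ.real (A R)) atTop (𝓝 1) := by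
  have lower := tendsto_measureReal_closedBall_add_ratio (E := E) (μ := μ) (-c)
  have upper := tendsto_measureReal_closedBall_add_ratio (E := E) (μ := μ) 0
  simp only [← sub_eq_add_neg, add_zero] at lower upper
  refine tendsto_of_tendsto_of_tendsto_of_le_of_le lower upper
    (fun R => mul_le_mul_of_nonneg_left (measureReal_mono (hA_lower R) ?_) (by positivity))
    (fun R => mul_le_mul_of_nonneg_left
      (measureReal_mono (hA_upper R) measure_closedBall_lt_top.ne) (by positivity))
  exact (isBounded_closedBall.subset (hA_upper R)).measure_lt_top.ne

theorem tendsto_measureReal_annulus_ratio {b c : ℝ} (hbc : b ≤ c) :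
    Tendsto (fun R : ℝ => (μ.real (closedBall (0 : E) R))⁻¹ *
      μ.real (closedBall (0 : E) (R + c) \ closedBall 0 (R + b))) atTop (𝓝 0) := by
  have limit := (tendsto_measureReal_closedBall_add_ratio (E := E) (μ := μ) c).sub
    (tendsto_measureReal_closedBall_add_ratio (E := E) (μ := μ) b)
  rw [sub_self] at limit
  refine limit.congr fun R => ?_
  rw [measureReal_sdiff (closedBall_subset_closedBall (by linarith)) measurableSet_closedBall
    measure_closedBall_lt_top.ne, mul_sub]

theorem isVanHove_of_closedBall_subset {A : ℝ → Set E} (hc : 0 ≤ c)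
    (hA_lower : ∀ R, closedBall 0 (R - c) ⊆ A R) (hA_upper : ∀ R, A R ⊆ closedBall 0 R)
    (hA_meas : ∀ R, MeasurableSet (A R)) : IsVanHove μ atTop A := by
  have ratio := tendsto_measureReal_ratio_of_closedBall_subset (μ := μ) hA_lower hA_upper
  have ratio_ne_zero := ratio.eventually_ne one_ne_zero
  refine ⟨fun R => isBounded_closedBall.subset (hA_upper R), hA_meas, ?_, fun ρ => ?_⟩
  · filter_upwards [ratio_ne_zero] with R hR hμ
    exact right_ne_zero_of_mul hR (by rw [measureReal_def, hμ, ENNReal.toReal_zero])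
  · have boundary_subset (R : ℝ) : vanHoveBoundary ρ (A R) ⊆
        closedBall 0 (R + |ρ|) \ closedBall 0 (R + -(c + |ρ|)) := by
      rw [show R + -(c + |ρ|) = R - c - |ρ| by ring]
      exact (vanHoveBoundary_mono (le_abs_self ρ) _).trans
        (vanHoveBoundary_subset_closedBall_diff_closedBall (hA_lower R) (hA_upper R) _)
    have boundary_ratio : Tendsto (fun R => (μ.real (closedBall (0 : E) R))⁻¹ *
        μ.real (vanHoveBoundary ρ (A R))) atTop (𝓝 0) := by
      refine squeeze_zero (fun R => by positivity) (fun R => mul_le_mul_of_nonneg_left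
        (measureReal_mono (boundary_subset R) ?_) (by positivity))
        (tendsto_measureReal_annulus_ratio (by linarith [abs_nonneg ρ]))
      exact (isBounded_closedBall.subset Set.sdiff_subset).measure_lt_top.ne
    have limit := (ratio.inv₀ one_ne_zero).mul boundary_ratio
    rw [mul_zero] at limit
    refine limit.congr' ?_
    filter_upwards [ratio_ne_zero] with R hR
    rw [mul_inv, inv_inv, mul_mul_mul_comm,
      mul_inv_cancel₀ (inv_eq_zero.not.1 (left_ne_zero_of_mul hR)), one_mul]

omit [NormedSpace ℝ E] [FiniteDimensional ℝ E] [MeasurableSpace E] [BorelSpace E] in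
theorem closedBall_sub_norm_subset (z : E) (R : ℝ) : closedBall 0 (R - ‖z‖) ⊆
    {x : E | x ∈ closedBall (0 : E) R ∧ x - z ∈ closedBall (0 : E) R} := fun x hx => by
  rw [mem_closedBall_zero_iff] at hx
  exact ⟨mem_closedBall_zero_iff.2 (by linarith [norm_nonneg z]),
    mem_closedBall_zero_iff.2 (by linarith [norm_sub_le x z])⟩

theorem isVanHove_closedBall_inter_preimage_sub (z : E) : IsVanHove μ atTop
    fun R : ℝ => {x : E | x ∈ closedBall (0 : E) R ∧ x - z ∈ closedBall (0 : E) R} :=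
  isVanHove_of_closedBall_subset (norm_nonneg z) (closedBall_sub_norm_subset z)
    (fun _ _ hx => hx.1) fun _ =>
      measurableSet_closedBall.inter (measurableSet_closedBall.preimage (measurable_sub_const z))

end VanHove

section Autocorrelation

theorem tsum_fst_image_eq_tsum_indicatorTensor {E F V : Type*} [NormedAddCommGroup V]
    {S : Set (E × F)} {star : E → F} (hstar : ∀ p ∈ S, star p.1 = p.2) (A : Set E) (g : F → V) :
    ∑' x : {x ∈ Prod.fst '' S | x ∈ A}, g (star x) = ∑' p : S, indicatorTensor A g p := by
  have fst_injective : Function.Injective fun p : S => p.1.1 := fun p q hpq =>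
    Subtype.ext (Prod.ext hpq (by rw [← hstar p p.2, ← hstar q q.2]; exact congrArg star hpq))
  rw [tsum_subtype {x ∈ Prod.fst '' S | x ∈ A} fun x => g (star x), ← fst_injective.tsum_eq]
  · refine tsum_congr fun p => ?_
    by_cases hp : p.1.1 ∈ A
    · have mem : p.1.1 ∈ {x ∈ Prod.fst '' S | x ∈ A} := ⟨⟨p, p.2, rfl⟩, hp⟩
      rw [Set.indicator_of_mem mem, hstar p p.2, indicatorTensor, Set.indicator_of_mem hp]
    · rw [Set.indicator_of_notMem fun h => hp h.2, indicatorTensor, Set.indicator_of_notMem hp]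
  · intro x hx
    obtain ⟨⟨p, hp, rfl⟩, -⟩ := Set.mem_of_indicator_ne_zero hx
    exact ⟨⟨p, hp⟩, rfl⟩

variable {𝕜 E F : Type*} [RCLike 𝕜] [NormedAddCommGroup E] [NormedAddCommGroup F]

theorem tsum_autocorrelation_eq_tsum_indicatorTensor {L : Submodule ℤ (E × F)} {star : E → F}
    (hstar : ∀ p ∈ L, star p.1 = p.2) {z : E} (hz : z ∈ Prod.fst '' (L : Set (E × F)))
    (f : F → 𝕜) (A : Set E) :
    ∑' x : {x ∈ Prod.fst '' (L : Set (E × F)) | x ∈ A},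
        f (star x) * starRingEnd 𝕜 (f (star (x - z))) =
      ∑' p : L, indicatorTensor A (fun u => f u * starRingEnd 𝕜 (f (u - star z))) p := by
  refine Eq.trans (tsum_congr ?_) (tsum_fst_image_eq_tsum_indicatorTensor hstar A _)
  rintro ⟨_, ⟨p, hp, rfl⟩, -⟩
  obtain ⟨q, hq, rfl⟩ := hz
  have star_sub : star (p.1 - q.1) = star p.1 - star q.1 := by
    rw [hstar p hp, hstar q hq]
    exact hstar _ (L.sub_mem hp hq)
  rw [star_sub]

theorem dense_comb_autocorrelation_coefficients_general [NormedSpace ℝ E]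
    [FiniteDimensional ℝ E] [MeasurableSpace E] [BorelSpace E] (μ : Measure E) [μ.IsAddHaarMeasure]
    [NormedSpace ℝ F] [FiniteDimensional ℝ F] [MeasurableSpace F] [BorelSpace F] (ν : Measure F)
    [ν.IsAddHaarMeasure] {L : Submodule ℤ (E × F)} [DiscreteTopology L] [IsZLattice ℝ L]
    (hL : Dense (Prod.snd '' (L : Set (E × F)))) {star : E → F}
    (hstar : ∀ p ∈ L, star p.1 = p.2) {f : F → 𝕜} (hf : Continuous f) {C r : ℝ}
    (hr : finrank ℝ F < 2 * r) (hfC : ∀ u, ‖u‖ ^ r * ‖f u‖ ≤ C) {z : E}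
    (hz : z ∈ Prod.fst '' (L : Set (E × F))) :
    Tendsto (fun R : ℝ => (μ.real (closedBall (0 : E) R))⁻¹ •
        ∑' x : {x ∈ Prod.fst '' (L : Set (E × F)) |
          x ∈ closedBall (0 : E) R ∧ x - z ∈ closedBall (0 : E) R},
            f (star x) * starRingEnd 𝕜 (f (star (x - z))))
      atTop
      (𝓝 ((ZLattice.covolume L (μ.prod ν))⁻¹ •
        ∫ u, f u * starRingEnd 𝕜 (f (u - star z)) ∂ν)) := by
  have hr₀ : 0 ≤ r := by linarith [(finrank ℝ F).cast_nonneg (α := ℝ)]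
  rw [two_mul] at hr
  obtain ⟨C', decay⟩ := exists_norm_le_mul_decayWeight hf hr₀ hfC
  have vanHove := isVanHove_closedBall_inter_preimage_sub (μ := μ) z
  have ratio := tendsto_measureReal_ratio_of_closedBall_subset (μ := μ)
    (closedBall_sub_norm_subset z) fun _ _ hx => hx.1
  have continuous_mul_conj : Continuous fun u => f u * starRingEnd 𝕜 (f (u - star z)) :=
    hf.mul (RCLike.continuous_conj.comp (hf.comp (continuous_sub_right (star z))))
  have weyl := vanHove.tendsto_tsum_indicatorTensor (ν := ν) hL hr continuous_mul_conj
    (norm_mul_conj_le_mul_decayWeight hr₀ decay (star z))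
  rw [← one_smul ℝ ((ZLattice.covolume L (μ.prod ν))⁻¹ • _)]
  refine (ratio.smul weyl).congr' ?_
  filter_upwards [vanHove.eventually_measure_ne_zero] with R hR
  have hμ : μ.real _ ≠ 0 := ENNReal.toReal_ne_zero.2 ⟨hR, (vanHove.isBounded R).measure_lt_top.ne⟩
  rw [smul_smul, mul_assoc, mul_inv_cancel₀ hμ, mul_one]
  congr 1
  exact (tsum_autocorrelation_eq_tsum_indicatorTensor hstar hz f _).symm

end Autocorrelation

/-- the finite autocorrelation coefficients
η_n(z) = (1/vol B_n) ∑_{x,y ∈ L∩B_n, x−y=z} f(x*) conj(f(y*)) of the dense Dirac comb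
converge to η(z) = (1/|det L̃|) ∫ f(u) conj(f(u − z*)) du for every z ∈ L. -/
theorem dense_comb_autocorrelation_coefficients (d m : ℕ)
    (L : Submodule ℤ (EuclideanSpace ℝ (Fin d) × EuclideanSpace ℝ (Fin m)))
    [DiscreteTopology L] [IsZLattice ℝ L]
    (hinj1 : Set.InjOn Prod.fst (L : Set (EuclideanSpace ℝ (Fin d) × EuclideanSpace ℝ (Fin m))))
    (hdense1 : Dense (physL d m L))
    (hinj2 : Set.InjOn Prod.snd (L : Set (EuclideanSpace ℝ (Fin d) × EuclideanSpace ℝ (Fin m))))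
    (hdense2 : Dense (Prod.snd '' (L : Set (EuclideanSpace ℝ (Fin d) × EuclideanSpace ℝ (Fin m)))))
    (star : EuclideanSpace ℝ (Fin d) → EuclideanSpace ℝ (Fin m))
    (hstar : ∀ p ∈ L, star (Prod.fst p) = Prod.snd p)
    (f : EuclideanSpace ℝ (Fin m) → ℂ) (hf : Continuous f)
    (C α : ℝ) (hC : 0 < C) (hα : 0 < α)
    (hdecay : ∀ x : EuclideanSpace ℝ (Fin m), ‖x‖ ^ ((m : ℝ) + 1 + α) * ‖f x‖ ≤ C)
    (z : EuclideanSpace ℝ (Fin d)) (hz : z ∈ physL d m L) :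
    Filter.Tendsto
      (fun n : ℕ => (volume (closedBall (0 : EuclideanSpace ℝ (Fin d)) n)).toReal⁻¹ •
        (∑' x : (({x ∈ physL d m L | x ∈ closedBall (0 : EuclideanSpace ℝ (Fin d)) n ∧
              x - z ∈ closedBall (0 : EuclideanSpace ℝ (Fin d)) n} :
            Set (EuclideanSpace ℝ (Fin d)))),
          f (star (x : EuclideanSpace ℝ (Fin d))) *
            (starRingEnd ℂ) (f (star ((x : EuclideanSpace ℝ (Fin d)) - z)))))
      Filter.atTop
      (nhds ((ZLattice.covolume L volume)⁻¹ •
        ∫ u, f u * (starRingEnd ℂ) (f (u - star z)))) := by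
  have hr : (finrank ℝ (EuclideanSpace ℝ (Fin m)) : ℝ) < 2 * (m + 1 + α) := by
    rw [finrank_euclideanSpace_fin]
    linarith [m.cast_nonneg (α := ℝ)]
  exact (dense_comb_autocorrelation_coefficients_general volume volume hdense2 hstar hf hr hdecay
    hz).comp tendsto_natCast_atTop_atTop
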